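/- Weighted L¹ bound for the Z-norm (Lemma 3.2(i), estimate (pi11)): For every h ∈ L²(I_δ), one has ‖h‖_Z ≲ ∫_{I_{√ε/8}} |h(β)| · ε²/(ε³ + |β|³) dβ. -/

import Mathlib

noncomputable section
open Set MeasureTheory Filter Real

/-- The principal value at `α` of the integral `∫_ℝ F(β) dβ`, understood as the limit of the
integrals over `{β : r < |α − β|}` as `r → 0⁺`. -/
def pvI (F : ℝ → ℝ) (α : ℝ) : ℝ :=
  limUnder (nhdsWithin (0:ℝ) (Ioi 0)) (fun r => ∫ β in {β : ℝ | r < |α - β|}, F β)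

/-- `ψ` is a smooth even cutoff, with values in `[0,1]`, supported in `[−1,1]`,
equal to `1` on `[−1/2,1/2]`. -/
def IsCutoff (ψ : ℝ → ℝ) : Prop :=
  ContDiff ℝ (⊤ : ℕ∞) ψ ∧ (∀ x : ℝ, ψ (-x) = ψ x) ∧ (∀ x : ℝ, ψ x ∈ Icc (0:ℝ) 1) ∧
    (∀ x : ℝ, 1 < |x| → ψ x = 0) ∧ (∀ x : ℝ, |x| ≤ 1/2 → ψ x = 1)

/-- The rescaled cutoff `ψ_r(x) = ψ(x/r)`. -/
def scut (ψ : ℝ → ℝ) (r x : ℝ) : ℝ := ψ (x / r)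

/-- `X̃(α) = 2ε + f(α) + g(α)`. -/
def Xt (ε : ℝ) (f g : ℝ → ℝ) (α : ℝ) : ℝ := 2 * ε + f α + g α

/-- The operator `T_{1,f}`. -/
def T1 (ψ : ℝ → ℝ) (ε : ℝ) (f : ℝ → ℝ) (h : ℝ → ℝ) (α : ℝ) : ℝ :=
  (2 * π)⁻¹ * pvI (fun β =>
    (f α - f β) / ((α - β) ^ 2 + (f α - f β) ^ 2) * h β * scut ψ (Real.sqrt ε) (α - β)) α

/-- The operator `T_{2,f}`. -/
def T2 (ψ : ℝ → ℝ) (ε : ℝ) (f : ℝ → ℝ) (h : ℝ → ℝ) (α : ℝ) : ℝ :=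
  (2 * π)⁻¹ * pvI (fun β =>
    (α - β) / ((α - β) ^ 2 + (f α - f β) ^ 2) * h β * scut ψ (Real.sqrt ε) (α - β)) α

/-- The operator `T_{3,(f,g)}`. -/
def T3 (ψ : ℝ → ℝ) (ε : ℝ) (f g : ℝ → ℝ) (h : ℝ → ℝ) (α : ℝ) : ℝ :=
  (2 * π)⁻¹ * ∫ β : ℝ,
    (2 * ε + f α + g β) / ((α - β) ^ 2 + (2 * ε + f α + g β) ^ 2) * h β *
      scut ψ (Real.sqrt ε) (α - β)

/-- The operator `T_{4,(f,g)}`. -/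
def T4 (ψ : ℝ → ℝ) (ε : ℝ) (f g : ℝ → ℝ) (h : ℝ → ℝ) (α : ℝ) : ℝ :=
  (2 * π)⁻¹ * ∫ β : ℝ,
    (α - β) / ((α - β) ^ 2 + (2 * ε + f α + g β) ^ 2) * h β * scut ψ (Real.sqrt ε) (α - β)

/-- The kernel of the operator `H`. -/
def Hker (ψ : ℝ → ℝ) (ε : ℝ) (f g : ℝ → ℝ) (α β : ℝ) : ℝ :=
  (α - β)⁻¹ * ((Xt ε f g α) ^ 2 / ((α - β) ^ 2 + (Xt ε f g α) ^ 2)) *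
    scut ψ (Real.sqrt ε / 2 ^ 6) α * scut ψ (Real.sqrt ε / 2 ^ 6) (α - β)

/-- The kernel of the operator `M`. -/
def Mker (ψ : ℝ → ℝ) (ε : ℝ) (f g : ℝ → ℝ) (α β : ℝ) : ℝ :=
  (Xt ε f g α) / ((α - β) ^ 2 + (Xt ε f g α) ^ 2) *
    scut ψ (Real.sqrt ε / 2 ^ 6) α * scut ψ (Real.sqrt ε / 2 ^ 6) (α - β)

/-- The operator `H` (a principal value integral in the second variable of the kernel). -/
def Hop (ψ : ℝ → ℝ) (ε : ℝ) (f g : ℝ → ℝ) (h : ℝ → ℝ) (α : ℝ) : ℝ :=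
  (2 * π)⁻¹ * pvI (fun β => Hker ψ ε f g α β * h β) α

/-- The adjoint operator `H*` (integration of the kernel of `H` in its first variable). -/
def Hstar (ψ : ℝ → ℝ) (ε : ℝ) (f g : ℝ → ℝ) (φ : ℝ → ℝ) (β : ℝ) : ℝ :=
  (2 * π)⁻¹ * pvI (fun α => Hker ψ ε f g α β * φ α) β

/-- The operator `M`. -/
def Mop (ψ : ℝ → ℝ) (ε : ℝ) (f g : ℝ → ℝ) (h : ℝ → ℝ) (α : ℝ) : ℝ :=
  (2 * π)⁻¹ * ∫ β : ℝ, Mker ψ ε f g α β * h β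

/-- The adjoint operator `M*` (integration of the kernel of `M` in its first variable). -/
def Mstar (ψ : ℝ → ℝ) (ε : ℝ) (f g : ℝ → ℝ) (φ : ℝ → ℝ) (β : ℝ) : ℝ :=
  (2 * π)⁻¹ * ∫ α : ℝ, Mker ψ ε f g α β * φ α

/-- The class `C₂` of test functions: `C¹` functions compactly supported in `I_δ = (−δ,δ)` with
`|φ⁽ᵏ⁾(α)| ≤ ε/(ε^{2+k} + |α|^{2+k})` on `I_δ` for `k ∈ {0,1}`. -/
def InC2 (δ ε : ℝ) (φ : ℝ → ℝ) : Prop :=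
  ContDiff ℝ 1 φ ∧ HasCompactSupport φ ∧ tsupport φ ⊆ Ioo (-δ) δ ∧
    ∀ α ∈ Ioo (-δ) δ,
      |φ α| ≤ ε / (ε ^ 2 + |α| ^ 2) ∧ |deriv φ α| ≤ ε / (ε ^ 3 + |α| ^ 3)

/-- The standing hypotheses on `f, g : (−δ,δ) → ℝ`: they are `C⁵`, with
`‖f‖_{C³} + ‖g‖_{C³} ≤ A`, `f(0) = f'(0) = g(0) = g'(0) = 0`, and
`f(α) + g(β) ≥ −ε` for `α, β ∈ (−4√ε, 4√ε)`. -/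
def GoodFG (δ A ε : ℝ) (f g : ℝ → ℝ) : Prop :=
  ContDiffOn ℝ 5 f (Ioo (-δ) δ) ∧ ContDiffOn ℝ 5 g (Ioo (-δ) δ) ∧
    f 0 = 0 ∧ g 0 = 0 ∧
    derivWithin f (Ioo (-δ) δ) 0 = 0 ∧ derivWithin g (Ioo (-δ) δ) 0 = 0 ∧
    (∀ x ∈ Ioo (-δ) δ, ∀ i : ℕ, i ≤ 3 →
      |iteratedDerivWithin i f (Ioo (-δ) δ) x| + |iteratedDerivWithin i g (Ioo (-δ) δ) x| ≤ A) ∧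
    (∀ α ∈ Ioo (-(4 * Real.sqrt ε)) (4 * Real.sqrt ε),
      ∀ β ∈ Ioo (-(4 * Real.sqrt ε)) (4 * Real.sqrt ε), -ε ≤ f α + g β)

lemma poisson_int (ε : ℝ) (hε : 0 < ε) : Integrable (fun x : ℝ => ε / (ε ^ 2 + x ^ 2)) := by
  have h := (integrable_inv_one_add_sq.comp_div hε.ne').const_mul ε⁻¹
  refine h.congr (Eventually.of_forall fun x => ?_)
  simp only
  field_simp

lemma poisson_integral (ε : ℝ) (hε : 0 < ε) : ∫ x : ℝ, ε / (ε ^ 2 + x ^ 2) = π := by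
  have h : (fun x : ℝ => ε / (ε ^ 2 + x ^ 2)) = fun x => ε⁻¹ * (1 + (x / ε) ^ 2)⁻¹ := by
    funext x
    field_simp
  rw [h, integral_const_mul, Measure.integral_comp_div (fun x : ℝ => (1 + x ^ 2)⁻¹) ε,
    integral_univ_inv_one_add_sq, abs_of_pos hε, smul_eq_mul]
  field_simp

lemma pv_bound (F D : ℝ → ℝ) (β : ℝ) (hF : Measurable F)
    (hint : ∀ r : ℝ, 0 < r → IntegrableOn F {α | r < |β - α|})
    (hD : Integrable D) (hb : ∀ t : ℝ, t ≠ 0 → |F (β + t) + F (β - t)| ≤ D t) :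
    |pvI F β| ≤ ∫ t, D t := by
  have hms : ∀ r : ℝ, MeasurableSet {α : ℝ | r < |β - α|} := fun r =>
    measurableSet_lt measurable_const (by fun_prop)
  have hms' : ∀ r : ℝ, MeasurableSet {t : ℝ | r < |t|} := fun r =>
    measurableSet_lt measurable_const (by fun_prop)
  set S : ℝ → ℝ := fun t => F (β + t) + F (β - t) with hS
  have hSm : Measurable S := by
    rw [hS]; fun_prop
  have key : ∀ r : ℝ, 0 < r → ∫ α in {α : ℝ | r < |β - α|}, F α
      = (1/2) * ∫ t, Set.indicator {t : ℝ | r < |t|} S t := by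
    intro r hr
    have hi := (integrable_indicator_iff (hms r)).2 (hint r hr)
    rw [← integral_indicator (hms r)]
    have h1 := integral_add_left_eq_self (μ := volume)
      (Set.indicator {α : ℝ | r < |β - α|} F) β
    have h2 := integral_sub_left_eq_self (Set.indicator {α : ℝ | r < |β - α|} F) volume β
    have h3 : ∫ t, Set.indicator {t : ℝ | r < |t|} S t
       = (∫ t, Set.indicator {α : ℝ | r < |β - α|} F (β + t))
        + ∫ t, Set.indicator {α : ℝ | r < |β - α|} F (β - t) := by
      rw [← integral_add (hi.comp_add_left β) (hi.comp_sub_left β)]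
      congr 1
      funext t
      simp only [Set.indicator, Set.mem_ofPred_eq, hS]
      have e1 : |β - (β + t)| = |t| := by rw [← abs_neg]; congr 1; ring
      have e2 : |β - (β - t)| = |t| := by congr 1; ring
      simp only [e1, e2]
      split_ifs <;> simp
    rw [h3, h1, h2]; ring
  have hlim : Tendsto (fun r : ℝ => ∫ α in {α : ℝ | r < |β - α|}, F α)
      (nhdsWithin (0:ℝ) (Ioi 0)) (nhds ((1/2) * ∫ t, S t)) := by
    have : Tendsto (fun r : ℝ => (1/2) * ∫ t, Set.indicator {t : ℝ | r < |t|} S t)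
      (nhdsWithin (0:ℝ) (Ioi 0)) (nhds ((1/2) * ∫ t, S t)) := by
      refine Tendsto.const_mul _ ?_
      refine tendsto_integral_filter_of_dominated_convergence D ?_ ?_ hD ?_
      · exact Eventually.of_forall fun r => (hSm.indicator (hms' r)).aestronglyMeasurable
      · filter_upwards [self_mem_nhdsWithin] with r hr
        filter_upwards [Measure.ae_ne volume (0:ℝ)] with t ht
        refine (norm_indicator_le_norm_self _ _).trans (hb t ht)
      · filter_upwards [Measure.ae_ne volume (0:ℝ)] with t ht
        refine tendsto_const_nhds.congr' ?_
        have h0 : ∀ᶠ r : ℝ in nhdsWithin (0:ℝ) (Ioi 0), r < |t| :=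
          nhdsWithin_le_nhds (eventually_lt_nhds (abs_pos.2 ht))
        filter_upwards [h0] with r hr
        rw [Set.indicator_of_mem]
        exact hr
    refine this.congr' ?_
    filter_upwards [self_mem_nhdsWithin] with r hr
    exact (key r hr).symm
  have : pvI F β = (1/2) * ∫ t, S t := hlim.limUnder_eq
  rw [this]
  have h4 : ‖∫ t, S t‖ ≤ ∫ t, D t := by
    refine norm_integral_le_of_norm_le hD ?_
    filter_upwards [Measure.ae_ne volume (0:ℝ)] with t ht
    exact hb t ht
  rw [Real.norm_eq_abs] at h4
  rw [abs_mul, abs_of_pos (by norm_num : (0:ℝ) < 1/2)]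
  linarith [abs_nonneg (∫ t, S t)]

lemma pv_zero (F : ℝ → ℝ) (β : ℝ) (h : ∀ x, F x = 0) : pvI F β = 0 := by
  have : F = fun _ => 0 := funext h
  subst this
  have h := pv_bound (fun _ => (0:ℝ)) (fun _ => 0) β measurable_const
    (fun r _ => integrableOn_zero) (integrable_zero _ _ _) (by simp)
  simpa using h

lemma Xt_facts (δ A ε : ℝ) (hδ : 0 < δ) (f g : ℝ → ℝ) (H : GoodFG δ A ε f g) :
    ContinuousOn (Xt ε f g) (Ioo (-δ) δ) ∧
    (∀ m : ℝ, 0 ≤ m → m < δ → ∀ x y : ℝ, |x| ≤ m → |y| ≤ m →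
      |Xt ε f g x - Xt ε f g y| ≤ A * m * |x - y|) ∧ Xt ε f g 0 = 2 * ε := by
  obtain ⟨hf, hg, f0, g0, f1, g1, hA, -⟩ := H
  set s := Ioo (-δ) δ with hs
  have hu : UniqueDiffOn ℝ s := uniqueDiffOn_Ioo _ _
  have h0 : (0:ℝ) ∈ s := ⟨by linarith, hδ⟩
  have hfd := hf.differentiableOn (by norm_num)
  have hgd := hg.differentiableOn (by norm_num)
  have hf' := hf.differentiableOn_iteratedDerivWithin (m := 1) (by norm_num) hu
  have hg' := hg.differentiableOn_iteratedDerivWithin (m := 1) (by norm_num) hu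
  have hA2 : ∀ x ∈ s, |derivWithin f s x + derivWithin g s x| ≤ A * |x| := by
    intro x hx
    have := Convex.norm_image_sub_le_of_norm_derivWithin_le (𝕜 := ℝ) (C := A)
      (f := fun x => iteratedDerivWithin 1 f s x + iteratedDerivWithin 1 g s x) (s := s)
      (hf'.add hg') (fun z hz => by
        rw [derivWithin_fun_add (hf' z hz) (hg' z hz)]
        have h2 := hA z hz 2 (by norm_num)
        rw [iteratedDerivWithin_succ (n := 1) (f := f),
          iteratedDerivWithin_succ (n := 1) (f := g)] at h2
        exact (norm_add_le _ _).trans h2) (convex_Ioo _ _) h0 hx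
    simpa [iteratedDerivWithin_one, f1, g1] using this
  refine ⟨?_, ?_, by simp [Xt, f0, g0]⟩
  · unfold Xt
    exact (continuousOn_const.add hf.continuousOn).add hg.continuousOn
  · intro m hm hmδ x y hx hy
    have hsub : Icc (-m) m ⊆ s := fun z hz => ⟨by linarith [hz.1], by linarith [hz.2]⟩
    have := Convex.norm_image_sub_le_of_norm_hasDerivWithin_le (𝕜 := ℝ) (C := A * m)
      (f := Xt ε f g) (f' := fun x => derivWithin f s x + derivWithin g s x) (s := Icc (-m) m)
      (fun z hz => by
        unfold Xt
        refine HasDerivWithinAt.mono ?_ hsub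
        exact ((hfd z (hsub hz)).hasDerivWithinAt.const_add (2 * ε)).add
          (hgd z (hsub hz)).hasDerivWithinAt) (fun z hz => by
        have hA0 : 0 ≤ A := le_trans (by positivity) (hA 0 h0 0 (by norm_num))
        exact (hA2 z (hsub hz)).trans (by
          have := abs_le.2 hz
          gcongr)) (convex_Icc _ _) (abs_le.1 hy) (abs_le.1 hx)
    exact this

lemma K_le (t X ε B : ℝ) (hε : 0 < ε) (h1 : ε ≤ X) (h2 : X ≤ B * ε) (hB : 1 ≤ B) :
    X ^ 2 / (t ^ 2 + X ^ 2) ≤ B ^ 2 * ε ^ 2 / (ε ^ 2 + t ^ 2) := by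
  have hX : 0 < X := lt_of_lt_of_le hε h1
  rw [div_le_div_iff₀ (by positivity) (by positivity)]
  have a : X ^ 2 ≤ B ^ 2 * ε ^ 2 := by rw [← mul_pow]; gcongr
  have b : (1:ℝ) ≤ B ^ 2 := one_le_pow₀ hB
  nlinarith [mul_le_mul_of_nonneg_right a (sq_nonneg t),
    mul_le_mul_of_nonneg_right b (by positivity : 0 ≤ ε ^ 2 * X ^ 2)]

lemma K_sub (t X Y ε B : ℝ) (hε : 0 < ε) (h1 : ε ≤ X) (h2 : X ≤ B * ε)
    (h3 : ε ≤ Y) (h4 : Y ≤ B * ε) :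
    |X ^ 2 / (t ^ 2 + X ^ 2) - Y ^ 2 / (t ^ 2 + Y ^ 2)| ≤
      |X - Y| * (2 * B * ε / (ε ^ 2 + t ^ 2)) := by
  have hX : 0 < X := lt_of_lt_of_le hε h1
  have hY : 0 < Y := lt_of_lt_of_le hε h3
  have e : X ^ 2 / (t ^ 2 + X ^ 2) - Y ^ 2 / (t ^ 2 + Y ^ 2)
      = (X - Y) * ((t ^ 2 / (t ^ 2 + X ^ 2)) * ((X + Y) / (t ^ 2 + Y ^ 2))) := by
    field_simp
    ring
  rw [e, abs_mul]
  refine mul_le_mul_of_nonneg_left ?_ (abs_nonneg _)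
  rw [abs_of_nonneg (by positivity)]
  have a1 : t ^ 2 / (t ^ 2 + X ^ 2) ≤ 1 := by
    rw [div_le_one (by positivity)]; nlinarith
  have a2 : (X + Y) / (t ^ 2 + Y ^ 2) ≤ 2 * B * ε / (ε ^ 2 + t ^ 2) := by
    have : ε ^ 2 ≤ Y ^ 2 := by gcongr
    exact div_le_div₀ (by linarith) (by linarith) (by positivity) (by linarith)
  calc _ ≤ 1 * ((X + Y) / (t ^ 2 + Y ^ 2)) := by gcongr
    _ ≤ _ := by rw [one_mul]; exact a2

lemma key_near (t ε ρ A B L Xa Xb φa φb ψa ψb : ℝ) (hε : 0 < ε) (ht : 0 < t) (hρ : 0 < ρ)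
    (hρε : ρ ^ 2 ≤ ε) (hA : 1 ≤ A) (hB : 1 ≤ B) (hL : 0 ≤ L)
    (h1 : ε ≤ Xa) (h2 : Xa ≤ B * ε) (h3 : ε ≤ Xb) (h4 : Xb ≤ B * ε)
    (hX : |Xa - Xb| ≤ 4 * A * ρ * t) (hφ : |φa - φb| ≤ 16 * t * (ε / ρ ^ 3))
    (hφb : |φb| ≤ 4 * (ε / ρ ^ 2)) (hψa : |ψa| ≤ 1) (hψb : |ψb| ≤ 1)
    (hψ : |ψa - ψb| ≤ 128 * L * t / ρ) :
    |Xa ^ 2 / (t ^ 2 + Xa ^ 2) * ψa * φa - Xb ^ 2 / (t ^ 2 + Xb ^ 2) * ψb * φb| ≤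
      t * (((16 + 512 * L) * B ^ 2 + 32 * A * B) * (ε ^ 2 / ρ ^ 3) * (ε / (ε ^ 2 + t ^ 2))) := by
  have k1 := K_le t Xa ε B hε h1 h2 hB
  have k2 := K_sub t Xa Xb ε B hε h1 h2 h3 h4
  have k0 : 0 ≤ Xa ^ 2 / (t ^ 2 + Xa ^ 2) := by positivity
  set Ka := Xa ^ 2 / (t ^ 2 + Xa ^ 2)
  set Kb := Xb ^ 2 / (t ^ 2 + Xb ^ 2)
  set P := ε / (ε ^ 2 + t ^ 2) with hP
  have hP0 : 0 < P := by positivity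
  have e : Ka * ψa * φa - Kb * ψb * φb =
      Ka * (ψa * (φa - φb) + (ψa - ψb) * φb) + (Ka - Kb) * (ψb * φb) := by ring
  have hq : |ψa * (φa - φb) + (ψa - ψb) * φb| ≤ (16 + 512 * L) * t * (ε / ρ ^ 3) := by
    calc _ ≤ |ψa| * |φa - φb| + |ψa - ψb| * |φb| := by
          rw [← abs_mul, ← abs_mul]; exact abs_add_le _ _
      _ ≤ 1 * (16 * t * (ε / ρ ^ 3)) + (128 * L * t / ρ) * (4 * (ε / ρ ^ 2)) := by gcongr
      _ = _ := by field_simp; ring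
  have hk : |Ka| ≤ B ^ 2 * ε * P := by
    rw [abs_of_nonneg k0]; refine k1.trans (le_of_eq ?_); rw [hP]; ring
  have hkk : |Ka - Kb| ≤ (4 * A * ρ * t) * (2 * B * P) := by
    refine k2.trans ?_
    rw [show 2 * B * ε / (ε ^ 2 + t ^ 2) = 2 * B * P by rw [hP]; ring]
    gcongr
  have hpb : |ψb * φb| ≤ 4 * (ε / ρ ^ 2) := by
    rw [abs_mul]
    calc _ ≤ 1 * |φb| := by gcongr
      _ ≤ _ := by rw [one_mul]; exact hφb
  rw [e]
  calc _ ≤ |Ka| * |ψa * (φa - φb) + (ψa - ψb) * φb| + |Ka - Kb| * |ψb * φb| := by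
        rw [← abs_mul, ← abs_mul]; exact abs_add_le _ _
    _ ≤ (B ^ 2 * ε * P) * ((16 + 512 * L) * t * (ε / ρ ^ 3)) +
        ((4 * A * ρ * t) * (2 * B * P)) * (4 * (ε / ρ ^ 2)) := by gcongr
    _ = t * ((16 + 512 * L) * B ^ 2 * (ε ^ 2 / ρ ^ 3) * P) +
        t * (32 * A * B * (ε * ρ ^ 2 / ρ ^ 3) * P) := by field_simp; ring
    _ ≤ t * ((16 + 512 * L) * B ^ 2 * (ε ^ 2 / ρ ^ 3) * P) +
        t * (32 * A * B * (ε * ε / ρ ^ 3) * P) := by gcongr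
    _ = _ := by ring

set_option maxHeartbeats 2000000 in
lemma Hstar_bound (δ A ε L : ℝ) (hδ : 0 < δ) (hδ1 : δ ≤ 1/100) (hA : 1 ≤ A) (ψ : ℝ → ℝ)
    (hψ : IsCutoff ψ) (hL0 : 0 ≤ L) (hL : ∀ x y, |ψ x - ψ y| ≤ L * |x - y|)
    (hε : 0 < ε) (hε1 : ε ≤ δ ^ 2 / 100)
    (f g : ℝ → ℝ) (H : GoodFG δ A ε f g) (φ : ℝ → ℝ) (hφ : InC2 δ ε φ) (β : ℝ)
    (hβ : |β| < √ε / 8) :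
    |Hstar ψ ε f g φ β| ≤ 3 * ((16 + 512 * L) * (6 * A) ^ 2 + 32 * A * (6 * A)) *
      (ε ^ 2 / (ε ^ 3 + |β| ^ 3)) := by
  obtain ⟨hXc, hXl, hX0⟩ := Xt_facts δ A ε hδ f g H
  have hlow := H.2.2.2.2.2.2.2
  obtain ⟨hψs, hψe, hψ01, hψ0, -⟩ := hψ
  obtain ⟨hφs, -, hφt, hφb⟩ := hφ
  set q := √ε with hq
  have hq0 : 0 < q := Real.sqrt_pos.2 hε
  have hqq : q ^ 2 = ε := Real.sq_sqrt hε.le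
  have hqδ : q ≤ δ / 10 := by
    refine (Real.sqrt_le_sqrt hε1).trans (le_of_eq ?_)
    rw [show δ ^ 2 / 100 = (δ / 10) ^ 2 by ring, Real.sqrt_sq (by positivity)]
  set B := 6 * A with hB
  have hB1 : 1 ≤ B := by linarith
  set R := q / 2 ^ 6 with hR
  have hR0 : 0 < R := by positivity
  have hX : ∀ x, |x| ≤ 2 * q → ε ≤ Xt ε f g x ∧ Xt ε f g x ≤ B * ε := by
    intro x hx
    have hx' := abs_le.1 hx
    constructor
    · have hm : x ∈ Ioo (-(4 * q)) (4 * q) := ⟨by linarith, by linarith⟩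
      have := hlow x hm x hm
      unfold Xt; linarith
    · have h1 := hXl (2 * q) (by positivity) (by linarith) x 0 hx (by simp; positivity)
      rw [hX0, sub_zero] at h1
      have h2 : A * (2 * q) * |x| ≤ A * (2 * q) * (2 * q) := by gcongr
      have h3 : A * (2 * q) * (2 * q) = 4 * A * ε := by rw [← hqq]; ring
      have := (abs_le.1 (h1.trans h2)).2
      rw [hB]; nlinarith
  have hΨ0 : ∀ x, R < |x| → ψ (x / R) = 0 := by
    intro x hx
    apply hψ0
    rw [abs_div, abs_of_pos hR0, lt_div_iff₀ hR0]; linarith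
  have hΨ1 : ∀ x, |ψ x| ≤ 1 := fun x => by
    rw [abs_of_nonneg (hψ01 x).1]; exact (hψ01 x).2
  have hφ1 : ∀ x, |φ x| ≤ ε / (ε ^ 2 + x ^ 2) := by
    intro x
    by_cases hx : x ∈ Ioo (-δ) δ
    · simpa using (hφb x hx).1
    · have : φ x = 0 := image_eq_zero_of_notMem_tsupport fun h => hx (hφt h)
      rw [this, abs_zero]; positivity
  set ρ := max |β| ε with hρ
  have hρ0 : 0 < ρ := lt_of_lt_of_le hε (le_max_right _ _)
  have hεq : ε ≤ q / 8 := by nlinarith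
  have hρq : ρ ≤ q / 8 := max_le hβ.le hεq
  have hρε : ρ ^ 2 ≤ ε := by rw [← hqq]; gcongr; linarith
  set C1 := (16 + 512 * L) * B ^ 2 + 32 * A * B with hC1
  have hC8 : 8 * B ^ 2 ≤ C1 := by
    have h1 : 0 ≤ L * B ^ 2 := by positivity
    have h2 : 0 ≤ A * B := by positivity
    rw [hC1]; nlinarith [sq_nonneg B]
  set F : ℝ → ℝ := fun α => Hker ψ ε f g α β * φ α with hF
  set p : ℝ → ℝ := fun x => ε / (ε ^ 2 + x ^ 2) with hp
  have hp0 : ∀ x, 0 ≤ p x := fun x => by rw [hp]; positivity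
  have hpi : Integrable p := poisson_int ε hε
  -- crude bounds
  have hF1 : ∀ α, |F α| ≤ |α - β|⁻¹ *
      ((Xt ε f g α) ^ 2 / ((α - β) ^ 2 + (Xt ε f g α) ^ 2)) * p α := by
    intro α
    simp only [hF, Hker, scut]
    rw [abs_mul, abs_mul, abs_mul, abs_mul, abs_inv]
    have h0 : 0 ≤ (Xt ε f g α) ^ 2 / ((α - β) ^ 2 + (Xt ε f g α) ^ 2) := by positivity
    rw [abs_of_nonneg h0]
    calc _ ≤ |α - β|⁻¹ * ((Xt ε f g α) ^ 2 / ((α - β) ^ 2 + (Xt ε f g α) ^ 2)) * 1 * 1 * p α := by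
          gcongr
          · exact hΨ1 _
          · exact hΨ1 _
          · exact hφ1 _
      _ = _ := by ring
  have hFz : ∀ α, R < |α| → F α = 0 := by
    intro α h
    simp only [hF, Hker, scut]
    rw [hΨ0 α h]; ring
  have hfar : ∀ α, ρ / 2 ≤ |α - β| → |F α| ≤ C1 * (ε ^ 2 / ρ ^ 3) * p α := by
    intro α hα
    have hs : 0 < |α - β| := by linarith
    by_cases hR' : R < |α|
    · rw [hFz α hR', abs_zero]
      have := hp0 α
      have : 0 ≤ C1 := by nlinarith [sq_nonneg B]
      positivity
    · have hα2 : |α| ≤ 2 * q := by push Not at hR'; rw [hR] at hR'; linarith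
      obtain ⟨x1, x2⟩ := hX α hα2
      refine (hF1 α).trans (mul_le_mul_of_nonneg_right ?_ (hp0 α))
      have hXp : 0 < Xt ε f g α := by linarith
      have k : (Xt ε f g α) ^ 2 / ((α - β) ^ 2 + (Xt ε f g α) ^ 2) ≤ B ^ 2 * ε ^ 2 / (ρ / 2) ^ 2 := by
        refine div_le_div₀ (by positivity) ?_ (by positivity) ?_
        · rw [← mul_pow]; gcongr
        · have : (ρ / 2) ^ 2 ≤ |α - β| ^ 2 := by gcongr
          rw [sq_abs] at this; nlinarith [sq_nonneg (Xt ε f g α)]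
      calc _ ≤ (ρ / 2)⁻¹ * (B ^ 2 * ε ^ 2 / (ρ / 2) ^ 2) := by gcongr
        _ = 8 * B ^ 2 * (ε ^ 2 / ρ ^ 3) := by field_simp; ring
        _ ≤ _ := by gcongr
  have hlb : ∀ x, |x - β| ≤ ρ / 2 → (ρ / 2) ^ 3 ≤ ε ^ 3 + |x| ^ 3 ∧ (ρ / 2) ^ 2 ≤ ε ^ 2 + x ^ 2 := by
    intro x hx
    have : ρ / 2 ≤ ε ∨ ρ / 2 ≤ |x| := by
      rcases le_total |β| ε with h | h
      · left; rw [hρ, max_eq_right h]; linarith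
      · right
        have e : ρ = |β| := max_eq_left h
        have := abs_sub_abs_le_abs_sub β x
        rw [abs_sub_comm] at this
        rw [e] at hx ⊢; linarith
    rw [← sq_abs x]
    have hx3 : 0 ≤ |x| ^ 3 := by positivity
    rcases this with h | h
    · have h3 : (ρ / 2) ^ 3 ≤ ε ^ 3 := by gcongr
      have h2 : (ρ / 2) ^ 2 ≤ ε ^ 2 := by gcongr
      exact ⟨by linarith, by linarith [sq_nonneg |x|]⟩
    · have h3 : (ρ / 2) ^ 3 ≤ |x| ^ 3 := by gcongr
      have h2 : (ρ / 2) ^ 2 ≤ |x| ^ 2 := by gcongr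
      exact ⟨by linarith [pow_pos hε 3], by linarith [sq_nonneg ε]⟩
  have hmem : ∀ x, |x - β| ≤ ρ / 2 → |x| ≤ 3 / 2 * ρ := by
    intro x hx
    have h1 := abs_sub_abs_le_abs_sub x β
    have h2 : |β| ≤ ρ := le_max_left _ _
    linarith
  have hnear : ∀ t, 0 < t → t ≤ ρ / 2 →
      |F (β + t) + F (β - t)| ≤ C1 * (ε ^ 2 / ρ ^ 3) * p t := by
    intro t ht htρ
    have ea : |β + t - β| ≤ ρ / 2 := by
      rw [show β + t - β = t by ring, abs_of_pos ht]; exact htρ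
    have eb : |β - t - β| ≤ ρ / 2 := by
      rw [show β - t - β = -t by ring, abs_neg, abs_of_pos ht]; exact htρ
    have hab : |β + t - (β - t)| = 2 * t := by
      rw [show β + t - (β - t) = 2 * t by ring, abs_of_pos (by positivity)]
    obtain ⟨a1, a2⟩ := hX (β + t) ((hmem _ ea).trans (by linarith))
    obtain ⟨b1, b2⟩ := hX (β - t) ((hmem _ eb).trans (by linarith))
    have hXX : |Xt ε f g (β + t) - Xt ε f g (β - t)| ≤ 4 * A * ρ * t := by
      refine (hXl (3 / 2 * ρ) (by positivity) (by linarith) _ _ (hmem _ ea) (hmem _ eb)).trans ?_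
      rw [hab]
      have : 0 ≤ A * ρ * t := by positivity
      nlinarith
    have hφφ : |φ (β + t) - φ (β - t)| ≤ 16 * t * (ε / ρ ^ 3) := by
      have hd := hφs.differentiable (by norm_num)
      have := Convex.norm_image_sub_le_of_norm_deriv_le (𝕜 := ℝ) (f := φ) (C := 8 * (ε / ρ ^ 3))
        (s := {x | |x - β| ≤ ρ / 2}) (x := β - t) (y := β + t) (fun x _ => hd x)
        (fun x hx => by
          have hx' : |x - β| ≤ ρ / 2 := hx
          have hm := hmem x hx'
          have hm' : x ∈ Ioo (-δ) δ := by
            have := abs_le.1 hm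
            exact ⟨by linarith, by linarith⟩
          refine (hφb x hm').2.trans ?_
          calc ε / (ε ^ 3 + |x| ^ 3) ≤ ε / (ρ / 2) ^ 3 := by
                gcongr; exact (hlb x hx').1
            _ = _ := by field_simp; norm_num)
        (by
          have : {x | |x - β| ≤ ρ / 2} = Metric.closedBall β (ρ / 2) := by
            ext x; simp [Real.dist_eq]
          rw [this]; exact convex_closedBall _ _) eb ea
      rw [Real.norm_eq_abs, Real.norm_eq_abs, hab] at this
      refine this.trans (le_of_eq (by ring))
    have hφbb : |φ (β - t)| ≤ 4 * (ε / ρ ^ 2) := by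
      refine (hφ1 _).trans ?_
      calc ε / (ε ^ 2 + (β - t) ^ 2) ≤ ε / (ρ / 2) ^ 2 := by
            gcongr; exact (hlb _ eb).2
        _ = _ := by field_simp; norm_num
    have hψψ : |ψ ((β + t) / R) - ψ ((β - t) / R)| ≤ 128 * L * t / ρ := by
      refine (hL _ _).trans ?_
      rw [← sub_div, abs_div, hab, abs_of_pos hR0]
      calc L * (2 * t / R) = 128 * L * t / q := by rw [hR]; field_simp; norm_num
        _ ≤ _ := by gcongr; linarith
    have hk := key_near t ε ρ A B L _ _ _ _ _ _ hε ht hρ0 hρε hA hB1 hL0 a1 a2 b1 b2 hXX hφφ hφbb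
      (hΨ1 ((β + t) / R)) (hΨ1 ((β - t) / R)) hψψ
    have e : F (β + t) + F (β - t) = t⁻¹ * ψ (t / R) *
      (Xt ε f g (β + t) ^ 2 / (t ^ 2 + Xt ε f g (β + t) ^ 2) * ψ ((β + t) / R) * φ (β + t) -
       Xt ε f g (β - t) ^ 2 / (t ^ 2 + Xt ε f g (β - t) ^ 2) * ψ ((β - t) / R) * φ (β - t)) := by
      simp only [hF, Hker, scut, ← hq, ← hR]
      rw [show β + t - β = t by ring, show β - t - β = -t by ring, neg_div R t, hψe, neg_sq, inv_neg]
      ring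
    have hk' := mul_le_mul (mul_le_mul_of_nonneg_left (hΨ1 (t / R)) (inv_pos.2 ht).le) hk
      (abs_nonneg _) (by positivity)
    rw [e, abs_mul, abs_mul, abs_of_pos (inv_pos.2 ht)]
    refine hk'.trans (le_of_eq ?_)
    rw [mul_one, ← mul_assoc, inv_mul_cancel₀ ht.ne', one_mul]
  set E := C1 * (ε ^ 2 / ρ ^ 3) with hE
  have hC0 : 0 ≤ C1 := by nlinarith [sq_nonneg B]
  have hE0 : 0 ≤ E := by positivity
  have hb1 : ∀ t, 0 < t → |F (β + t) + F (β - t)| ≤ E * (p t + p (β + t) + p (β - t)) := by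
    intro t ht
    have h1 := mul_nonneg hE0 (hp0 t)
    have h2 := mul_nonneg hE0 (hp0 (β + t))
    have h3 := mul_nonneg hE0 (hp0 (β - t))
    rcases le_total t (ρ / 2) with h | h
    · have := hnear t ht h
      linarith
    · have k1 := hfar (β + t) (by rw [show β + t - β = t by ring, abs_of_pos ht]; exact h)
      have k2 := hfar (β - t) (by
        rw [show β - t - β = -t by ring, abs_neg, abs_of_pos ht]; exact h)
      have := abs_add_le (F (β + t)) (F (β - t))
      linarith
  have hb2 : ∀ t, t ≠ 0 → |F (β + t) + F (β - t)| ≤ E * (p t + p (β + t) + p (β - t)) := by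
    intro t ht
    rcases lt_or_gt_of_ne ht with h | h
    · have := hb1 (-t) (by linarith)
      rw [show β + -t = β - t by ring, show β - -t = β + t by ring,
        show p (-t) = p t by simp [hp], add_comm] at this
      linarith
    · exact hb1 t h
  -- measurability
  have hFm : Measurable F := by
    classical
    set Xm := (Ioo (-δ) δ).piecewise (Xt ε f g) (fun _ => (0:ℝ)) with hXm
    have hXmm : Measurable Xm := hXc.measurable_piecewise continuousOn_const measurableSet_Ioo
    have hψm : Measurable ψ := hψs.continuous.measurable
    have hφm : Measurable φ := hφs.continuous.measurable
    have : F = fun α => (α - β)⁻¹ * ((Xm α) ^ 2 / ((α - β) ^ 2 + (Xm α) ^ 2)) *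
        ψ (α / R) * ψ ((α - β) / R) * φ α := by
      funext α
      simp only [hF, Hker, scut]
      by_cases h : R < |α|
      · rw [hΨ0 α h]; ring
      · have hm : α ∈ Ioo (-δ) δ := by
          push Not at h
          have := abs_le.1 h
          exact ⟨by linarith, by linarith⟩
        rw [hXm, Set.piecewise_eq_of_mem _ _ _ hm]
    rw [this]
    fun_prop
  have hFi : ∀ r : ℝ, 0 < r → IntegrableOn F {α | r < |β - α|} := by
    intro r hr
    refine Integrable.mono' (hpi.integrableOn.const_mul r⁻¹) hFm.aestronglyMeasurable ?_
    have hms : MeasurableSet {α : ℝ | r < |β - α|} :=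
      measurableSet_lt measurable_const (by fun_prop)
    filter_upwards [ae_restrict_mem hms] with α hα
    have hα' : r < |α - β| := by rw [abs_sub_comm]; exact hα
    refine (hF1 α).trans (mul_le_mul_of_nonneg_right ?_ (hp0 α))
    have : (Xt ε f g α) ^ 2 / ((α - β) ^ 2 + (Xt ε f g α) ^ 2) ≤ 1 :=
      div_le_one_of_le₀ (by nlinarith [sq_nonneg (α - β)]) (by positivity)
    calc _ ≤ r⁻¹ * 1 := by gcongr
      _ = _ := mul_one _
  have hpa := hpi.comp_add_left β
  have hpb := hpi.comp_sub_left β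
  have main := pv_bound F _ β hFm hFi (((hpi.add hpa).add hpb).const_mul E) hb2
  have hI : ∫ t, E * (p t + p (β + t) + p (β - t)) = E * (3 * π) := by
    have hpab : Integrable (fun t => p t + p (β + t)) := hpi.add hpa
    rw [integral_const_mul, integral_add hpab hpb, integral_add hpi hpa,
      integral_add_left_eq_self p β, integral_sub_left_eq_self p volume β,
      poisson_integral ε hε]
    ring
  have main' : |pvI F β| ≤ E * (3 * π) := main.trans (le_of_eq hI)
  have h23 : ε ^ 2 / ρ ^ 3 ≤ 2 * (ε ^ 2 / (ε ^ 3 + |β| ^ 3)) := by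
    have h1 : |β| ^ 3 ≤ ρ ^ 3 := by gcongr; exact le_max_left _ _
    have h2 : ε ^ 3 ≤ ρ ^ 3 := by gcongr; exact le_max_right _ _
    have h3 : 0 ≤ |β| ^ 3 := by positivity
    rw [← mul_div_assoc, div_le_div_iff₀ (by positivity) (by positivity)]
    nlinarith [sq_nonneg ε]
  have : |Hstar ψ ε f g φ β| = (2 * π)⁻¹ * |pvI F β| := by
    unfold Hstar
    rw [abs_mul, abs_of_pos (by positivity)]
  rw [this]
  calc _ ≤ (2 * π)⁻¹ * (E * (3 * π)) := by gcongr
    _ = 3 / 2 * C1 * (ε ^ 2 / ρ ^ 3) := by rw [hE]; field_simp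
    _ ≤ 3 / 2 * C1 * (2 * (ε ^ 2 / (ε ^ 3 + |β| ^ 3))) := by gcongr
    _ = _ := by ring

lemma Hstar_zero (ε : ℝ) (ψ : ℝ → ℝ) (hψ : IsCutoff ψ) (hε : 0 < ε) (f g φ : ℝ → ℝ) (β : ℝ)
    (hβ : √ε / 8 ≤ |β|) : Hstar ψ ε f g φ β = 0 := by
  have hq0 : 0 < √ε := Real.sqrt_pos.2 hε
  have hR0 : 0 < √ε / 2 ^ 6 := by positivity
  have hΨ0 : ∀ x, √ε / 2 ^ 6 < |x| → ψ (x / (√ε / 2 ^ 6)) = 0 := by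
    intro x hx
    apply hψ.2.2.2.1
    rw [abs_div, abs_of_pos hR0, lt_div_iff₀ hR0]; linarith
  unfold Hstar
  rw [pv_zero, mul_zero]
  intro α
  simp only [Hker, scut]
  by_cases h : √ε / 2 ^ 6 < |α|
  · rw [hΨ0 α h]; ring
  · rw [hΨ0 (α - β)]
    · ring
    · have := abs_sub_abs_le_abs_sub β α
      rw [abs_sub_comm] at this
      linarith

/-- **Weighted L¹ bound for the Z-norm (Lemma 3.2(i), estimate (3.11)).**  For every
`h ∈ L²(I_δ)`, one has `‖h‖_Z ≲ ∫_{I_{√ε/8}} |h(β)| ε²/(ε³+|β|³) dβ`, i.e. for every `φ ∈ C₂`,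
`|∫ h · H*φ| ≤ C ∫_{I_{√ε/8}} |h(β)| ε²/(ε³+|β|³) dβ` with `C` depending only on `A`, `δ`
(and `ψ`). -/
theorem Znorm_le_weighted_L1 (δ A : ℝ) (hδ : δ ∈ Ioc (0:ℝ) (1/100)) (hA : 1 ≤ A)
    (ψ : ℝ → ℝ) (hψ : IsCutoff ψ) :
    ∃ C : ℝ, 0 < C ∧
      ∀ ε : ℝ, ε ∈ Ioc (0:ℝ) (δ ^ 2 / 100) →
      ∀ f g : ℝ → ℝ, GoodFG δ A ε f g →
      ∀ h : ℝ → ℝ, Measurable h → IntegrableOn (fun x => h x ^ 2) (Ioo (-δ) δ) →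
        ∀ φ : ℝ → ℝ, InC2 δ ε φ →
          |∫ α : ℝ, h α * Hstar ψ ε f g φ α| ≤
            C * ∫ β in Ioo (-(Real.sqrt ε / 8)) (Real.sqrt ε / 8),
              |h β| * (ε ^ 2 / (ε ^ 3 + |β| ^ 3)) := by
  have hcs : HasCompactSupport ψ := by
    refine HasCompactSupport.of_support_subset_isCompact (isCompact_Icc (a := (-1:ℝ)) (b := 1)) ?_
    intro x hx
    by_contra h
    refine hx (hψ.2.2.2.1 x ?_)
    by_contra h'
    exact h (abs_le.1 (not_lt.1 h'))
  obtain ⟨L, hL⟩ := hψ.1.lipschitzWith_of_hasCompactSupport hcs (by simp)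
  have hL' : ∀ x y, |ψ x - ψ y| ≤ (L : ℝ) * |x - y| := fun x y => by
    simpa [Real.dist_eq] using hL.dist_le_mul x y
  have hA0 : 0 < A := by linarith
  refine ⟨3 * ((16 + 512 * (L : ℝ)) * (6 * A) ^ 2 + 32 * A * (6 * A)), by positivity, ?_⟩
  set C := 3 * ((16 + 512 * (L : ℝ)) * (6 * A) ^ 2 + 32 * A * (6 * A)) with hC
  have hC0 : 0 ≤ C := by positivity
  intro ε hε f g H h hm hh φ hφ
  have hε0 : 0 < ε := hε.1
  have hqδ : √ε ≤ δ / 10 := by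
    refine (Real.sqrt_le_sqrt hε.2).trans (le_of_eq ?_)
    rw [show δ ^ 2 / 100 = (δ / 10) ^ 2 by ring, Real.sqrt_sq (by linarith [hδ.1])]
  have hδ0 := hδ.1
  set w : ℝ → ℝ := fun β => ε ^ 2 / (ε ^ 3 + |β| ^ 3) with hw
  have hw0 : ∀ β, 0 ≤ w β := fun β => by rw [hw]; positivity
  have hw1 : ∀ β, w β ≤ ε ^ 2 / ε ^ 3 := fun β => by
    simp only [hw]
    gcongr
    have : 0 ≤ |β| ^ 3 := by positivity
    linarith
  have hwm : Measurable w := by rw [hw]; fun_prop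
  set I := Ioo (-(√ε / 8)) (√ε / 8) with hI
  have hsub : I ⊆ Ioo (-δ) δ := fun x hx => ⟨by linarith [hx.1], by linarith [hx.2]⟩
  have hint : IntegrableOn (fun β => |h β| * w β) I := by
    have h1 : IntegrableOn (fun β => (1 + h β ^ 2) * (ε ^ 2 / ε ^ 3)) I := by
      have hc : IntegrableOn (fun _ : ℝ => (1:ℝ)) I := by
        rw [hI]; exact integrableOn_const (by simp)
      exact (hc.add (hh.mono_set hsub)).mul_const _
    refine Integrable.mono' h1 (by fun_prop) (Eventually.of_forall fun β => ?_)
    rw [Real.norm_eq_abs, abs_mul, abs_abs, abs_of_nonneg (hw0 β)]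
    have h2 : |h β| ≤ 1 + h β ^ 2 := by
      rw [← sq_abs]; nlinarith [sq_nonneg (|h β| - 1), sq_nonneg (|h β|)]
    have := hw1 β
    have := hw0 β
    gcongr
  have hmeas : MeasurableSet I := measurableSet_Ioo
  rw [← integral_const_mul, ← integral_indicator hmeas, ← Real.norm_eq_abs]
  refine norm_integral_le_of_norm_le
    ((integrable_indicator_iff hmeas).2 (hint.const_mul C)) (Eventually.of_forall fun β => ?_)
  by_cases hβ : β ∈ I
  · rw [Set.indicator_of_mem hβ, norm_mul, Real.norm_eq_abs, Real.norm_eq_abs]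
    have := Hstar_bound δ A ε L hδ.1 hδ.2 hA ψ hψ L.2 hL' hε0 hε.2 f g H φ hφ β (abs_lt.2 hβ)
    calc _ ≤ |h β| * (C * w β) := by gcongr
      _ = _ := by ring
  · rw [Set.indicator_of_notMem hβ, Hstar_zero ε ψ hψ hε0 f g φ β, mul_zero, norm_zero]
    by_contra h'
    exact hβ (abs_lt.1 (not_le.1 h'))
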